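/- arXiv:2010.01249 — 4 statements merged into one kernel-verified Lean document; each statement's English description precedes it below -/
import Mathlib

section
/- Fix ω0 ∈ ℝ, σ0² > 0, 0 < σH² < σL², and h ∈ (0,1). Define p(s) := h·φ(s; ω0, σH²+σ0²) / (h·φ(s; ω0, σH²+σ0²) + (1−h)·φ(s; ω0, σL²+σ0²)). For q ∈ {H, L} and r ∈ (0,∞), define D_{r,q}(ω) := ∫_{ω0−r}^{ω0+r} φ(t; ω, σq²) dt and a_q*(s,r) := (∫ ω·φ(s; ω, σq²)·φ(ω; ω0, σ0²)/D_{r,q}(ω) dω) / (∫ φ(s; ω, σq²)·φ(ω; ω0, σ0²)/D_{r,q}(ω) dω), and set a*(s,r) := p(s)·a_H*(s,r) + (1−p(s))·a_L*(s,r). Then for every signal s and radii r, r′ with ω0 < s < ω0 + r and r < r′ < ∞, we have a*(s, r′) < a*(s, r). -/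
open MeasureTheory Real Filter

/-- The Gaussian density with mean `m` and variance `v`. -/
noncomputable def gauss (x m v : ℝ) : ℝ :=
  (Real.sqrt (2 * Real.pi * v))⁻¹ * Real.exp (-(x - m) ^ 2 / (2 * v))

/-- `p(s)`: the posterior probability of a high-quality source given signal `s`
(independent of the censoring radius). -/
noncomputable def pHigh (ω0 v0 vH vL h s : ℝ) : ℝ :=
  h * gauss s ω0 (vH + v0) /
    (h * gauss s ω0 (vH + v0) + (1 - h) * gauss s ω0 (vL + v0))

/-- `D_{r,q}(ω)`: the probability of the window `[ω0−r, ω0+r]` under a type-`q` signal. -/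
noncomputable def winProbQ (ω0 vq r ω : ℝ) : ℝ :=
  ∫ t in Set.Icc (ω0 - r) (ω0 + r), gauss t ω vq

/-- `a_q*(s,r)`: the censored posterior-mean action when the source quality is known. -/
noncomputable def aQ (ω0 v0 vq r s : ℝ) : ℝ :=
  (∫ ω : ℝ, ω * (gauss s ω vq * gauss ω ω0 v0 / winProbQ ω0 vq r ω)) /
    (∫ ω : ℝ, gauss s ω vq * gauss ω ω0 v0 / winProbQ ω0 vq r ω)

/-- `a*(s,r)`: the optimal action, a convex combination of the quality-specific actions. -/
noncomputable def aOpt (ω0 v0 vH vL h r s : ℝ) : ℝ :=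
  pHigh ω0 v0 vH vL h s * aQ ω0 v0 vH r s +
    (1 - pHigh ω0 v0 vH vL h s) * aQ ω0 v0 vL r s

/-- The symmetrised window factor. -/
noncomputable def winE (v : ℝ) (S : Set ℝ) (x : ℝ) : ℝ :=
  ∫ t in S, Real.exp (-t ^ 2 / (2 * v)) * Real.cosh (t * x / v)

lemma cosh_cross_lt {x y a b : ℝ} (hx : 0 ≤ x) (hxy : x < y) (ha : 0 ≤ a) (hab : a < b) :
    Real.cosh (a * y) * Real.cosh (b * x) < Real.cosh (b * y) * Real.cosh (a * x) := by
  have h1 : Real.cosh (a * y + b * x) < Real.cosh (b * y + a * x) := by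
    have hy : 0 ≤ y := by linarith
    have hb : 0 ≤ b := by linarith
    rw [Real.cosh_lt_cosh, abs_of_nonneg (by positivity), abs_of_nonneg (by positivity)]
    nlinarith [mul_pos (sub_pos.2 hab) (sub_pos.2 hxy)]
  have h2 : Real.cosh (a * y - b * x) ≤ Real.cosh (b * y - a * x) := by
    rw [Real.cosh_le_cosh]
    refine abs_le_abs ?_ ?_
    · nlinarith [mul_nonneg (sub_pos.2 hab).le (show 0 ≤ x + y by linarith)]
    · nlinarith [mul_nonneg (show 0 ≤ a + b by linarith) (sub_pos.2 hxy).le]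
  rw [Real.cosh_add, Real.cosh_add] at h1
  rw [Real.cosh_sub, Real.cosh_sub] at h2
  linarith

lemma winE_neg (v : ℝ) (S : Set ℝ) (x : ℝ) : winE v S (-x) = winE v S x := by
  unfold winE
  congr 1; ext t
  rw [show t * -x / v = -(t * x / v) by ring, Real.cosh_neg]

lemma winE_abs (v : ℝ) (S : Set ℝ) (x : ℝ) : winE v S |x| = winE v S x := by
  rcases abs_choice x with h | h <;> rw [h]
  exact winE_neg v S x

lemma winE_cont (v r : ℝ) : Continuous (winE v (Set.Icc (-r) r)) := by
  unfold winE
  apply continuous_parametric_integral_of_continuous _ isCompact_Icc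
  simp only [Function.uncurry_def]
  fun_prop

lemma winE_int (v r x : ℝ) :
    IntegrableOn (fun t => Real.exp (-t ^ 2 / (2 * v)) * Real.cosh (t * x / v))
      (Set.Icc (-r) r) := by
  apply Continuous.integrableOn_Icc
  fun_prop

lemma setInt_pos {f : ℝ → ℝ} {S : Set ℝ} (hS : MeasurableSet S) (hS0 : 0 < volume S)
    (hf : ∀ t ∈ S, 0 < f t) (hi : IntegrableOn f S) : 0 < ∫ t in S, f t := by
  rw [setIntegral_pos_iff_support_of_nonneg_ae _ hi]
  · rwa [Set.inter_eq_right.2]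
    intro t ht
    exact (hf t ht).ne'
  · rw [EventuallyLE, ae_restrict_iff' hS]
    exact Eventually.of_forall fun t ht => (hf t ht).le

lemma winE_zero_pos {v r : ℝ} (hr : 0 < r) : 0 < winE v (Set.Icc (-r) r) 0 := by
  apply setInt_pos measurableSet_Icc _ _ (winE_int v r 0)
  · rw [Real.volume_Icc]; simp; linarith
  · intro t _
    have := Real.cosh_pos (t * 0 / v)
    positivity

lemma winE_ge {v r : ℝ} (x : ℝ) :
    winE v (Set.Icc (-r) r) 0 ≤ winE v (Set.Icc (-r) r) x := by
  unfold winE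
  apply setIntegral_mono_on (winE_int v r 0) (winE_int v r x) measurableSet_Icc
  intro t _
  apply mul_le_mul_of_nonneg_left _ (Real.exp_pos _).le
  simp [Real.one_le_cosh]

lemma winE_cross {v r r' x y : ℝ} (hv : 0 < v) (hr : 0 < r) (hrr : r < r')
    (hx : 0 ≤ x) (hxy : x < y) :
    winE v (Set.Icc (-r') r') x * winE v (Set.Icc (-r) r) y <
      winE v (Set.Icc (-r') r') y * winE v (Set.Icc (-r) r) x := by
  set A := Set.Icc (-r) r with hA
  set B := Set.Icc (-r') r' \ A with hB
  have hsub : A ⊆ Set.Icc (-r') r' := Set.Icc_subset_Icc (by linarith) hrr.le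
  have hBm : MeasurableSet B := measurableSet_Icc.diff measurableSet_Icc
  have hiB : ∀ z, IntegrableOn
      (fun t => Real.exp (-t ^ 2 / (2 * v)) * Real.cosh (t * z / v)) B :=
    fun z => (winE_int v r' z).mono_set Set.sdiff_subset
  have hsplit : ∀ z, winE v (Set.Icc (-r') r') z = winE v A z + winE v B z := by
    intro z
    unfold winE
    rw [← setIntegral_union Set.disjoint_sdiff_right hBm (winE_int v r z) (hiB z),
      Set.union_sdiff_cancel hsub]
  have key : ∀ a b : ℝ, |a| < |b| →
      Real.cosh (a * y / v) * Real.cosh (b * x / v) <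
        Real.cosh (b * y / v) * Real.cosh (a * x / v) := by
    intro a b hab
    have h := cosh_cross_lt (div_nonneg hx hv.le) (div_lt_div_of_pos_right hxy hv)
      (abs_nonneg a) hab
    have e : ∀ a z : ℝ, 0 ≤ z → Real.cosh (|a| * (z / v)) = Real.cosh (a * z / v) := by
      intro a z hz
      rw [← Real.cosh_abs (a * z / v), abs_div, abs_mul, abs_of_nonneg hz, abs_of_pos hv]
      congr 1; ring
    rwa [e _ _ hx, e _ _ hx, e _ _ (hx.trans hxy.le), e _ _ (hx.trans hxy.le)] at h
  set cx := Real.cosh (r * x / v)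
  set cy := Real.cosh (r * y / v)
  have hcx : 0 < cx := Real.cosh_pos _
  have hcy : 0 < cy := Real.cosh_pos _
  have h1 : winE v A y * cx ≤ winE v A x * cy := by
    unfold winE
    rw [← integral_mul_const, ← integral_mul_const]
    apply setIntegral_mono_on ((winE_int v r y).mul_const _) ((winE_int v r x).mul_const _)
      measurableSet_Icc
    intro t ht
    rw [mul_assoc, mul_assoc]
    apply mul_le_mul_of_nonneg_left _ (Real.exp_pos _).le
    have ht' : |t| ≤ |r| := by rw [abs_of_pos hr]; exact abs_le.2 ht
    rcases ht'.lt_or_eq with h | h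
    · have := key t r h
      simp only [cx, cy]
      linarith
    · rcases abs_eq_abs.1 h with rfl | rfl
      · simp only [cx, cy]; linarith
      · simp only [cx, cy, neg_mul, neg_div, Real.cosh_neg]; linarith
  have h2 : winE v B x * cy < winE v B y * cx := by
    unfold winE
    rw [← integral_mul_const, ← integral_mul_const, ← sub_pos, ← integral_sub
      ((hiB y).mul_const _) ((hiB x).mul_const _)]
    apply setInt_pos hBm
    · refine lt_of_lt_of_le ?_ (measure_mono (show Set.Ioc r r' ⊆ B from ?_))
      · rw [Real.volume_Ioc]; simpa using hrr
      · intro t ht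
        exact ⟨⟨by linarith [ht.1], ht.2⟩, fun h => absurd h.2 (not_le.2 ht.1)⟩
    · intro t ht
      have ht' : |r| < |t| := by
        rw [abs_of_pos hr]
        by_contra h
        exact ht.2 (abs_le.1 (not_lt.1 h))
      have := mul_lt_mul_of_pos_left (key r t ht') (Real.exp_pos (-t ^ 2 / (2 * v)))
      simp only [cx, cy]
      linarith
    · exact ((hiB y).mul_const _).sub ((hiB x).mul_const _)
  have hAx : 0 < winE v A x := (winE_zero_pos hr).trans_le (winE_ge x)
  have hAy : 0 < winE v A y := (winE_zero_pos hr).trans_le (winE_ge y)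
  have hBx : 0 ≤ winE v B x := by
    unfold winE
    exact setIntegral_nonneg hBm fun t _ => mul_nonneg (Real.exp_pos _).le (Real.cosh_pos _).le
  rw [hsplit, hsplit]
  have : winE v B x * winE v A y < winE v B y * winE v A x := by
    have a1 : winE v B x * (winE v A y * cx) ≤ winE v B x * (winE v A x * cy) :=
      mul_le_mul_of_nonneg_left h1 hBx
    have a2 : (winE v B x * cy) * winE v A x < (winE v B y * cx) * winE v A x :=
      mul_lt_mul_of_pos_right h2 hAx
    have a3 : (winE v B x * winE v A y) * cx < (winE v B y * winE v A x) * cx := by linarith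
    exact lt_of_mul_lt_mul_right a3 hcx.le
  linarith

/-- integrability of linear-exponential times Gaussian -/
lemma exp_gauss_bound {v0 : ℝ} (hv0 : 0 < v0) (c x : ℝ) :
    Real.exp (c * x) * gauss x 0 v0 ≤
      ((Real.sqrt (2 * Real.pi * v0))⁻¹ * Real.exp (c ^ 2 * v0)) *
        Real.exp (-(1 / (4 * v0)) * x ^ 2) := by
  unfold gauss
  rw [mul_left_comm, ← Real.exp_add, mul_assoc _ (Real.exp _), ← Real.exp_add]
  apply mul_le_mul_of_nonneg_left _ (by positivity)
  apply Real.exp_le_exp.2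
  have : c ^ 2 * v0 + -(1 / (4 * v0)) * x ^ 2 - (c * x + -(x - 0) ^ 2 / (2 * v0))
      = (2 * c * v0 - x) ^ 2 / (4 * v0) := by
    field_simp; ring
  have h2 : 0 ≤ (2 * c * v0 - x) ^ 2 / (4 * v0) := by positivity
  linarith

lemma gauss_pos {x m v : ℝ} (hv : 0 < v) : 0 < gauss x m v := by
  unfold gauss
  have := Real.pi_pos
  positivity

lemma gauss_cont (v : ℝ) : Continuous (fun x => gauss x 0 v) := by
  unfold gauss; fun_prop

lemma gauss_even (x v : ℝ) : gauss (-x) 0 v = gauss x 0 v := by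
  unfold gauss; congr 3; ring

lemma int_exp {v0 : ℝ} (hv0 : 0 < v0) (c : ℝ) :
    Integrable fun x => Real.exp (c * x) * gauss x 0 v0 := by
  refine Integrable.mono' ((integrable_exp_neg_mul_sq (b := 1 / (4 * v0)) (by positivity)).const_mul
    ((Real.sqrt (2 * Real.pi * v0))⁻¹ * Real.exp (c ^ 2 * v0))) ?_ ?_
  · have := gauss_cont v0
    exact Continuous.aestronglyMeasurable (by fun_prop)
  · refine Eventually.of_forall fun x => ?_
    rw [Real.norm_of_nonneg (mul_pos (Real.exp_pos _) (gauss_pos hv0)).le]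
    exact exp_gauss_bound hv0 c x

lemma int_mul_exp {v0 : ℝ} (hv0 : 0 < v0) (c : ℝ) :
    Integrable fun x => x * Real.exp (c * x) * gauss x 0 v0 := by
  refine Integrable.mono' (((integrable_mul_exp_neg_mul_sq (b := 1 / (4 * v0))
    (by positivity)).norm).const_mul
    ((Real.sqrt (2 * Real.pi * v0))⁻¹ * Real.exp (c ^ 2 * v0))) ?_ ?_
  · have := gauss_cont v0
    exact Continuous.aestronglyMeasurable (by fun_prop)
  · refine Eventually.of_forall fun x => ?_
    rw [mul_assoc, norm_mul, norm_mul x,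
      Real.norm_of_nonneg (mul_pos (Real.exp_pos _) (gauss_pos hv0)).le,
      Real.norm_of_nonneg (Real.exp_pos _).le]
    have := mul_le_mul_of_nonneg_left (exp_gauss_bound hv0 c x) (norm_nonneg x)
    linarith

lemma int_div {E f : ℝ → ℝ} {e : ℝ} (hE : Continuous E) (he : 0 < e) (hEe : ∀ x, e ≤ E x)
    (hf : Integrable f) : Integrable fun x => f x / E x := by
  simp_rw [div_eq_mul_inv]
  refine hf.mul_bdd (c := e⁻¹) ?_ ?_
  · exact (hE.inv₀ fun x => (he.trans_le (hEe x)).ne').aestronglyMeasurable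
  · refine Eventually.of_forall fun x => ?_
    rw [norm_inv, Real.norm_of_nonneg (he.le.trans (hEe x))]
    exact inv_anti₀ he (hEe x)

lemma int_avg {f : ℝ → ℝ} (hf : Integrable f) : ∫ x, f x = ∫ x, (f x + f (-x)) / 2 := by
  rw [integral_div, integral_add hf hf.comp_neg, integral_neg_eq_self]
  ring

lemma int_cosh {v0 : ℝ} (hv0 : 0 < v0) (c : ℝ) :
    Integrable fun x => Real.cosh (c * x) * gauss x 0 v0 := by
  have := ((int_exp hv0 c).add (int_exp hv0 (-c))).div_const 2
  refine this.congr (Eventually.of_forall fun x => ?_)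
  simp only [Pi.add_apply, Real.cosh_eq, neg_mul]; ring

lemma int_sinh {v0 : ℝ} (hv0 : 0 < v0) (c : ℝ) :
    Integrable fun x => x * Real.sinh (c * x) * gauss x 0 v0 := by
  have := ((int_mul_exp hv0 c).sub (int_mul_exp hv0 (-c))).div_const 2
  refine this.congr (Eventually.of_forall fun x => ?_)
  simp only [Pi.sub_apply, Real.sinh_eq, neg_mul]; ring

/-- `x tanh (c x)` -/
noncomputable def Tf (c x : ℝ) : ℝ := x * Real.sinh (c * x) / Real.cosh (c * x)

lemma Tf_abs (c x : ℝ) : Tf c |x| = Tf c x := by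
  rcases abs_choice x with h | h <;> rw [h]
  simp [Tf]

lemma Tf_lt {c x y : ℝ} (hc : 0 < c) (hx : 0 ≤ x) (hxy : x < y) : Tf c x < Tf c y := by
  unfold Tf
  rw [div_lt_div_iff₀ (Real.cosh_pos _) (Real.cosh_pos _)]
  have h1 : 0 < Real.sinh (c * y - c * x) := by
    rw [Real.sinh_pos_iff]; nlinarith
  rw [Real.sinh_sub] at h1
  have h2 : 0 ≤ Real.sinh (c * x) := by rw [Real.sinh_nonneg_iff]; positivity
  have h3 := mul_nonneg h2 (Real.cosh_pos (c * y)).le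
  have h4 : 0 < Real.sinh (c * y) * Real.cosh (c * x) := by linarith
  have h5 := mul_le_mul_of_nonneg_left h1.le hx
  nlinarith [mul_pos (sub_pos.2 hxy) h4]

lemma Tf_exists {c m : ℝ} (hc : 0 < c) (hm : 0 ≤ m) : ∃ x, 0 ≤ x ∧ Tf c x = m := by
  have hcont : Continuous (Tf c) := by
    unfold Tf
    exact Continuous.div (by fun_prop) (by fun_prop) fun x => (Real.cosh_pos _).ne'
  set k := Real.sinh c / Real.cosh c with hk
  have hk0 : 0 < k := div_pos (Real.sinh_pos_iff.2 hc) (Real.cosh_pos _)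
  set b := 1 + m / k with hb
  have hb1 : 1 ≤ b := by
    have : 0 ≤ m / k := by positivity
    linarith
  have hTb : m ≤ Tf c b := by
    have h1 : k ≤ Real.sinh (c * b) / Real.cosh (c * b) := by
      rw [hk, div_le_div_iff₀ (Real.cosh_pos _) (Real.cosh_pos _)]
      have h1 : 0 ≤ Real.sinh (c * b - c) := by
        rw [Real.sinh_nonneg_iff]; nlinarith
      rw [Real.sinh_sub] at h1
      linarith
    have h2 : b * k ≤ Tf c b := by
      unfold Tf
      rw [mul_div_assoc]
      exact mul_le_mul_of_nonneg_left h1 (by linarith)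
    have h3 : b * k = k + m := by rw [hb]; field_simp
    linarith
  have h0 : Tf c 0 ≤ m := by simpa [Tf] using hm
  obtain ⟨x, hx, hxe⟩ := intermediate_value_Icc (show (0:ℝ) ≤ b by linarith)
    hcont.continuousOn ⟨h0, hTb⟩
  exact ⟨x, hx.1, hxe⟩

lemma ratio_lt {v0 c e e' : ℝ} (hv0 : 0 < v0) (hc : 0 < c) {E E' : ℝ → ℝ}
    (hE : Continuous E) (he : 0 < e) (hEe : ∀ x, e ≤ E x) (hEa : ∀ x, E |x| = E x)
    (hE' : Continuous E') (he' : 0 < e') (hEe' : ∀ x, e' ≤ E' x) (hEa' : ∀ x, E' |x| = E' x)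
    (hcross : ∀ x y, 0 ≤ x → x < y → E' x * E y < E' y * E x) :
    (∫ x, x * Real.sinh (c * x) * gauss x 0 v0 / E' x) /
      (∫ x, Real.cosh (c * x) * gauss x 0 v0 / E' x) <
    (∫ x, x * Real.sinh (c * x) * gauss x 0 v0 / E x) /
      (∫ x, Real.cosh (c * x) * gauss x 0 v0 / E x) := by
  have iN := int_div hE he hEe (int_sinh hv0 c)
  have iD := int_div hE he hEe (int_cosh hv0 c)
  have iN' := int_div hE' he' hEe' (int_sinh hv0 c)
  have iD' := int_div hE' he' hEe' (int_cosh hv0 c)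
  have pE : ∀ x, 0 < E x := fun x => he.trans_le (hEe x)
  have pE' : ∀ x, 0 < E' x := fun x => he'.trans_le (hEe' x)
  have posD : ∀ F : ℝ → ℝ, (∀ x, 0 < F x) →
      Integrable (fun x => Real.cosh (c * x) * gauss x 0 v0 / F x) →
      0 < ∫ x, Real.cosh (c * x) * gauss x 0 v0 / F x := by
    intro F hF hi
    rw [← setIntegral_univ]
    apply setInt_pos MeasurableSet.univ (by simp) _ hi.integrableOn
    intro x _
    exact div_pos (mul_pos (Real.cosh_pos _) (gauss_pos hv0)) (hF x)
  have hD := posD E pE iD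
  have hD' := posD E' pE' iD'
  have hN' : 0 ≤ ∫ x, x * Real.sinh (c * x) * gauss x 0 v0 / E' x := by
    apply integral_nonneg
    intro x
    refine div_nonneg (mul_nonneg ?_ (gauss_pos hv0).le) (pE' x).le
    rcases le_total 0 x with h | h
    · exact mul_nonneg h (Real.sinh_nonneg_iff.2 (by positivity))
    · exact mul_nonneg_of_nonpos_of_nonpos h (Real.sinh_nonpos_iff.2 (by nlinarith))
  set N := ∫ x, x * Real.sinh (c * x) * gauss x 0 v0 / E x
  set D := ∫ x, Real.cosh (c * x) * gauss x 0 v0 / E x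
  set N' := ∫ x, x * Real.sinh (c * x) * gauss x 0 v0 / E' x
  set D' := ∫ x, Real.cosh (c * x) * gauss x 0 v0 / E' x
  set m := N' / D' with hm
  obtain ⟨z, hz, hzm⟩ := Tf_exists (c := c) (m := m) hc (by positivity)
  set R := E' z / E z with hR
  have hfi : Integrable fun x => (x * Real.sinh (c * x) * gauss x 0 v0 / E x
      - m * (Real.cosh (c * x) * gauss x 0 v0 / E x)) -
      R * (x * Real.sinh (c * x) * gauss x 0 v0 / E' x
      - m * (Real.cosh (c * x) * gauss x 0 v0 / E' x)) :=
    (iN.sub (iD.const_mul m)).sub ((iN'.sub (iD'.const_mul m)).const_mul R)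
  have hval : ∫ x, ((x * Real.sinh (c * x) * gauss x 0 v0 / E x
      - m * (Real.cosh (c * x) * gauss x 0 v0 / E x)) -
      R * (x * Real.sinh (c * x) * gauss x 0 v0 / E' x
      - m * (Real.cosh (c * x) * gauss x 0 v0 / E' x))) = N - m * D := by
    have j1 : Integrable fun x => x * Real.sinh (c * x) * gauss x 0 v0 / E x
      - m * (Real.cosh (c * x) * gauss x 0 v0 / E x) := iN.sub (iD.const_mul m)
    have j2 : Integrable fun x => R * (x * Real.sinh (c * x) * gauss x 0 v0 / E' x
      - m * (Real.cosh (c * x) * gauss x 0 v0 / E' x)) := (iN'.sub (iD'.const_mul m)).const_mul R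
    rw [integral_sub j1 j2,
      integral_const_mul, integral_sub iN (iD.const_mul m), integral_sub iN' (iD'.const_mul m),
      integral_const_mul, integral_const_mul]
    change N - m * D - R * (N' - m * D') = _
    have : m * D' = N' := by rw [hm]; field_simp
    rw [this]; ring
  have hform : ∀ x, ((x * Real.sinh (c * x) * gauss x 0 v0 / E x
      - m * (Real.cosh (c * x) * gauss x 0 v0 / E x)) -
      R * (x * Real.sinh (c * x) * gauss x 0 v0 / E' x
      - m * (Real.cosh (c * x) * gauss x 0 v0 / E' x))) =
      ((Tf c x - m) * (E' x * E z - E' z * E x)) *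
        (Real.cosh (c * x) * gauss x 0 v0 / (E x * E' x * E z)) := by
    intro x
    have h1 := (pE x).ne'
    have h2 := (pE' x).ne'
    have h3 := (pE z).ne'
    have h4 := (Real.cosh_pos (c * x)).ne'
    rw [hR, Tf]
    field_simp
  have hpos : ∀ x, |x| ≠ z → 0 < (Tf c x - m) * (E' x * E z - E' z * E x) := by
    intro x hxz
    rw [← Tf_abs, ← hEa x, ← hEa' x, ← hzm]
    rcases lt_or_gt_of_ne hxz with h | h
    · exact mul_pos_of_neg_of_neg (sub_neg.2 (Tf_lt hc (abs_nonneg x) h))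
        (sub_neg.2 (hcross _ _ (abs_nonneg x) h))
    · exact mul_pos (sub_pos.2 (Tf_lt hc hz h)) (sub_pos.2 (hcross _ _ hz h))
  have hgt : 0 < N - m * D := by
    rw [← hval]
    have hk : ∀ x, 0 < Real.cosh (c * x) * gauss x 0 v0 / (E x * E' x * E z) := fun x =>
      div_pos (mul_pos (Real.cosh_pos _) (gauss_pos hv0))
        (mul_pos (mul_pos (pE x) (pE' x)) (pE z))
    rw [integral_pos_iff_support_of_nonneg _ hfi]
    · refine lt_of_lt_of_le ?_ (measure_mono (show Set.Ioi z ⊆ _ from ?_))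
      · simp
      · intro x hx
        rw [Function.mem_support, hform]
        have hx' : z < x := hx
        exact (mul_pos (hpos x (by rw [abs_of_pos (hz.trans_lt hx')]; exact hx'.ne')) (hk x)).ne'
    · intro x
      simp only [Pi.zero_apply]
      rw [hform]
      refine mul_nonneg ?_ (hk x).le
      by_cases h : |x| = z
      · rw [← Tf_abs, h, hzm]; simp
      · exact (hpos x h).le
  rw [lt_div_iff₀ hD]
  linarith

lemma winProb_eq {v r : ℝ} (hv : 0 < v) (ω0 x : ℝ) :
    winProbQ ω0 v r (x + ω0) = (Real.sqrt (2 * Real.pi * v))⁻¹ * Real.exp (-x ^ 2 / (2 * v)) *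
      winE v (Set.Icc (-r) r) x := by
  have h1 : winProbQ ω0 v r (x + ω0) = ∫ t, (Set.Icc (-r) r).indicator
      (fun t => gauss t x v) t := by
    unfold winProbQ
    rw [← integral_indicator measurableSet_Icc, ← integral_add_right_eq_self _ ω0]
    congr 1; ext t
    by_cases ht : t ∈ Set.Icc (-r) r
    · rw [Set.indicator_of_mem ht, Set.indicator_of_mem]
      · unfold gauss; congr 3; ring
      · exact ⟨by linarith [ht.1], by linarith [ht.2]⟩
    · rw [Set.indicator_of_notMem ht, Set.indicator_of_notMem]
      exact fun h => ht ⟨by linarith [h.1], by linarith [h.2]⟩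
  have hgi : Integrable ((Set.Icc (-r) r).indicator (fun t => gauss t x v)) := by
    rw [integrable_indicator_iff measurableSet_Icc]
    apply Continuous.integrableOn_Icc
    unfold gauss; fun_prop
  rw [h1, int_avg hgi]
  unfold winE
  rw [← integral_const_mul, ← integral_indicator measurableSet_Icc]
  congr 1; ext t
  have hE : ∀ t, gauss t x v = (Real.sqrt (2 * Real.pi * v))⁻¹ * Real.exp (-x ^ 2 / (2 * v)) *
      (Real.exp (-t ^ 2 / (2 * v)) * Real.exp (t * x / v)) := by
    intro t
    unfold gauss
    rw [← Real.exp_add, mul_assoc _ (Real.exp _), ← Real.exp_add]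
    congr 2
    field_simp; ring
  by_cases ht : t ∈ Set.Icc (-r) r
  · have ht' : -t ∈ Set.Icc (-r) r := ⟨by linarith [ht.2], by linarith [ht.1]⟩
    rw [Set.indicator_of_mem ht, Set.indicator_of_mem ht, Set.indicator_of_mem ht', hE, hE,
      Real.cosh_eq, neg_sq, neg_mul]
    rw [show -(t * x) / v = -(t * x / v) by ring]
    ring
  · have ht' : -t ∉ Set.Icc (-r) r := fun h => ht ⟨by linarith [h.2], by linarith [h.1]⟩
    rw [Set.indicator_of_notMem ht, Set.indicator_of_notMem ht, Set.indicator_of_notMem ht']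
    simp

lemma weight_eq {v v0 r : ℝ} (hv : 0 < v) (hr : 0 < r) (ω0 s x : ℝ) :
    gauss s (x + ω0) v * gauss (x + ω0) ω0 v0 / winProbQ ω0 v r (x + ω0) =
      Real.exp (-(s - ω0) ^ 2 / (2 * v)) *
       (Real.exp ((s - ω0) / v * x) * gauss x 0 v0 / winE v (Set.Icc (-r) r) x) := by
  rw [winProb_eq hv]
  have h1 : gauss s (x + ω0) v = (Real.sqrt (2 * Real.pi * v))⁻¹ * Real.exp (-x ^ 2 / (2 * v)) *
      (Real.exp (-(s - ω0) ^ 2 / (2 * v)) * Real.exp ((s - ω0) / v * x)) := by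
    unfold gauss
    rw [← Real.exp_add, mul_assoc _ (Real.exp _), ← Real.exp_add]
    congr 2
    field_simp; ring
  have h2 : gauss (x + ω0) ω0 v0 = gauss x 0 v0 := by
    unfold gauss; congr 3; ring
  rw [h1, h2]
  have h3 : (Real.sqrt (2 * Real.pi * v))⁻¹ ≠ 0 := by
    have := Real.pi_pos
    positivity
  have h4 : winE v (Set.Icc (-r) r) x ≠ 0 := ((winE_zero_pos hr).trans_le (winE_ge x)).ne'
  have h5 := (Real.exp_pos (-x ^ 2 / (2 * v))).ne'
  generalize (Real.sqrt (2 * Real.pi * v))⁻¹ = C at *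
  field_simp

lemma aQ_eq {v v0 r : ℝ} (hv0 : 0 < v0) (hv : 0 < v) (hr : 0 < r) (ω0 s : ℝ) :
    aQ ω0 v0 v r s = ω0 +
      (∫ x, x * Real.sinh ((s - ω0) / v * x) * gauss x 0 v0 / winE v (Set.Icc (-r) r) x) /
      (∫ x, Real.cosh ((s - ω0) / v * x) * gauss x 0 v0 / winE v (Set.Icc (-r) r) x) := by
  set c := (s - ω0) / v with hc
  set E := winE v (Set.Icc (-r) r) with hEdef
  have hE : Continuous E := winE_cont v r
  have he : 0 < E 0 := winE_zero_pos hr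
  have hEe : ∀ x, E 0 ≤ E x := fun x => winE_ge x
  have i1 := int_div hE he hEe (int_exp hv0 c)
  have i2 := int_div hE he hEe (int_mul_exp hv0 c)
  have hE2 : ∀ x, E (-x) = E x := winE_neg v _
  have f1 : ∫ x, Real.exp (c * x) * gauss x 0 v0 / E x =
      ∫ x, Real.cosh (c * x) * gauss x 0 v0 / E x := by
    rw [int_avg i1]
    congr 1; ext x
    rw [gauss_even, hE2, Real.cosh_eq, mul_neg]; ring
  have f2 : ∫ x, x * Real.exp (c * x) * gauss x 0 v0 / E x =
      ∫ x, x * Real.sinh (c * x) * gauss x 0 v0 / E x := by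
    rw [int_avg i2]
    congr 1; ext x
    rw [gauss_even, hE2, Real.sinh_eq, mul_neg]; ring
  set κ := Real.exp (-(s - ω0) ^ 2 / (2 * v))
  have hκ : 0 < κ := Real.exp_pos _
  have hden : ∫ ω : ℝ, gauss s ω v * gauss ω ω0 v0 / winProbQ ω0 v r ω =
      κ * ∫ x, Real.exp (c * x) * gauss x 0 v0 / E x := by
    rw [← integral_add_right_eq_self _ ω0, ← integral_const_mul]
    congr 1; ext x
    exact weight_eq hv hr ω0 s x
  have hnum : ∫ ω : ℝ, ω * (gauss s ω v * gauss ω ω0 v0 / winProbQ ω0 v r ω) =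
      κ * ((∫ x, x * Real.exp (c * x) * gauss x 0 v0 / E x) +
        ω0 * ∫ x, Real.exp (c * x) * gauss x 0 v0 / E x) := by
    rw [← integral_add_right_eq_self _ ω0, ← integral_const_mul, ← integral_add i2
      (i1.const_mul ω0), ← integral_const_mul]
    congr 1; ext x
    rw [weight_eq hv hr ω0 s x]
    ring
  have hpos : 0 < ∫ x, Real.cosh (c * x) * gauss x 0 v0 / E x := by
    rw [← setIntegral_univ]
    apply setInt_pos MeasurableSet.univ (by simp) _
      (int_div hE he hEe (int_cosh hv0 c)).integrableOn
    intro x _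
    exact div_pos (mul_pos (Real.cosh_pos _) (gauss_pos hv0)) (he.trans_le (hEe x))
  unfold aQ
  rw [hden, hnum, f1, f2, mul_div_mul_left _ _ hκ.ne', add_div, mul_div_cancel_right₀ _ hpos.ne',
    add_comm]

lemma aQ_lt {v v0 ω0 s r r' : ℝ} (hv0 : 0 < v0) (hv : 0 < v) (hs : ω0 < s) (hr : 0 < r)
    (hrr : r < r') : aQ ω0 v0 v r' s < aQ ω0 v0 v r s := by
  have hr' : 0 < r' := hr.trans hrr
  rw [aQ_eq hv0 hv hr, aQ_eq hv0 hv hr']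
  have := ratio_lt hv0 (div_pos (sub_pos.2 hs) hv)
    (winE_cont v r) (winE_zero_pos hr) (fun x => winE_ge x) (winE_abs v _)
    (winE_cont v r') (winE_zero_pos hr') (fun x => winE_ge x) (winE_abs v _)
    (fun x y hx hxy => winE_cross hv hr hrr hx hxy)
  linarith

/-- Proposition 3 (`prop:dadr`): for a signal `s` with `ω0 < s < ω0 + r`, the optimal action
is strictly decreasing in the censoring radius. -/
theorem stmt_4 (ω0 v0 vH vL h : ℝ) (hv0 : 0 < v0) (hvH : 0 < vH) (hHL : vH < vL)
    (hh0 : 0 < h) (hh1 : h < 1) :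
    ∀ s r r' : ℝ, ω0 < s → s < ω0 + r → r < r' →
      aOpt ω0 v0 vH vL h r' s < aOpt ω0 v0 vH vL h r s := by
  intro s r r' hs hsr hrr
  have hr : 0 < r := by linarith
  have hvL : 0 < vL := hvH.trans hHL
  have h1 := aQ_lt hv0 hvH hs hr hrr
  have h2 := aQ_lt hv0 hvL hs hr hrr
  have a1 : 0 < h * gauss s ω0 (vH + v0) := mul_pos hh0 (gauss_pos (by linarith))
  have a2 : 0 < (1 - h) * gauss s ω0 (vL + v0) :=
    mul_pos (by linarith) (gauss_pos (by linarith))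
  have p0 : 0 < pHigh ω0 v0 vH vL h s := div_pos a1 (by linarith)
  have p1 : pHigh ω0 v0 vH vL h s < 1 := by
    unfold pHigh
    rw [div_lt_one (by linarith)]
    linarith
  unfold aOpt
  have b1 := mul_lt_mul_of_pos_left h1 p0
  have b2 := mul_lt_mul_of_pos_left h2 (sub_pos.2 p1)
  linarith
end

section
/- Fix ω0 ∈ ℝ, σ0² > 0, σH² > 0, and h ∈ (0,1). Define p(s) := h·φ(s; ω0, σH²+σ0²) / (h·φ(s; ω0, σH²+σ0²) + (1−h)·φ(s; ω0, σL²+σ0²)) and the uncensored optimal action a*(s, ∞) := p(s)·(σH²·ω0 + σ0²·s)/(σH² + σ0²) + (1−p(s))·(σL²·ω0 + σ0²·s)/(σL² + σ0²). Then there exists a threshold σ̄L² such that whenever σL² > σ̄L², the function s ↦ a*(s, ∞) is not monotone: in particular there exist signals s₁, s₂ with ω0 < s₁ < s₂ and a*(s₁, ∞) > a*(s₂, ∞). -/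
open MeasureTheory Real Filter

/-- The uncensored optimal action `a*(s,∞)`. -/
noncomputable def aUncens (ω0 v0 vH vL h s : ℝ) : ℝ :=
  pHigh ω0 v0 vH vL h s * ((vH * ω0 + v0 * s) / (vH + v0)) +
    (1 - pHigh ω0 v0 vH vL h s) * ((vL * ω0 + v0 * s) / (vL + v0))

lemma aux_pos (x m v : ℝ) (hv : 0 < v) : 0 < gauss x m v := by
  unfold gauss
  have := Real.pi_pos
  positivity

lemma aux_form (ω0 v0 vH vL h s : ℝ) (hA : 0 < vH + v0) (hB : 0 < vL + v0) :
    aUncens ω0 v0 vH vL h s = ω0 + v0 / (vH + v0) * (pHigh ω0 v0 vH vL h s * (s - ω0)) +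
      v0 * ((1 - pHigh ω0 v0 vH vL h s) * ((s - ω0) / (vL + v0))) := by
  unfold aUncens
  generalize pHigh ω0 v0 vH vL h s = p
  field_simp
  ring

lemma aux_p01 (ω0 v0 vH vL h s : ℝ) (hA : 0 < vH + v0) (hB : 0 < vL + v0)
    (hh0 : 0 < h) (hh1 : h < 1) :
    0 ≤ pHigh ω0 v0 vH vL h s ∧ pHigh ω0 v0 vH vL h s ≤ 1 ∧
    pHigh ω0 v0 vH vL h s ≤
      h * gauss s ω0 (vH + v0) / ((1 - h) * gauss s ω0 (vL + v0)) := by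
  have h1 := aux_pos s ω0 _ hA
  have h2 := aux_pos s ω0 _ hB
  have h3 : 0 < 1 - h := by linarith
  have h4 : 0 < h * gauss s ω0 (vH + v0) := by positivity
  have h5 : 0 < (1 - h) * gauss s ω0 (vL + v0) := by positivity
  unfold pHigh
  refine ⟨by positivity, ?_, ?_⟩
  · rw [div_le_one (by positivity)]; linarith
  · apply div_le_div_of_nonneg_left h4.le h5; linarith

lemma aux_lim1 (ω0 v0 vH h : ℝ) (hv0 : 0 < v0) (hvH : 0 < vH)
    (hh0 : 0 < h) (hh1 : h < 1) :
    Tendsto (fun vL => aUncens ω0 v0 vH vL h (ω0 + 1)) atTop (nhds (ω0 + v0 / (vH + v0))) := by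
  have hA : 0 < vH + v0 := by linarith
  have hBt : Tendsto (fun vL : ℝ => vL + v0) atTop atTop := tendsto_atTop_add_const_right _ _ tendsto_id
  have hg : Tendsto (fun vL => gauss (ω0 + 1) ω0 (vL + v0)) atTop (nhds 0) := by
    have e1 : Tendsto (fun vL => (Real.sqrt (2 * Real.pi * (vL + v0)))⁻¹) atTop (nhds 0) :=
      tendsto_inv_atTop_zero.comp (Real.tendsto_sqrt_atTop.comp
        (hBt.const_mul_atTop (by positivity)))
    have e2 : Tendsto (fun vL : ℝ => Real.exp (-(ω0 + 1 - ω0) ^ 2 / (2 * (vL + v0)))) atTop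
        (nhds (Real.exp 0)) :=
      (Real.continuous_exp.tendsto 0).comp
        (tendsto_const_nhds.div_atTop (hBt.const_mul_atTop (by norm_num)))
    simpa [gauss] using e1.mul e2
  have hgp := aux_pos (ω0 + 1) ω0 _ hA
  have hp : Tendsto (fun vL => pHigh ω0 v0 vH vL h (ω0 + 1)) atTop (nhds 1) := by
    have := (tendsto_const_nhds (x := h * gauss (ω0 + 1) ω0 (vH + v0))).div
      ((tendsto_const_nhds (x := h * gauss (ω0 + 1) ω0 (vH + v0))).add (hg.const_mul (1 - h)))
      (by simp only [mul_zero, add_zero]; positivity)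
    simp only [mul_zero, add_zero] at this
    rw [div_self (by positivity)] at this
    exact this
  have hB : Tendsto (fun vL : ℝ => (ω0 + 1 - ω0) / (vL + v0)) atTop (nhds 0) :=
    tendsto_const_nhds.div_atTop hBt
  have key := ((hp.mul_const (ω0 + 1 - ω0)).const_mul (v0 / (vH + v0))).const_add ω0 |>.add
    ((((tendsto_const_nhds (x := (1:ℝ))).sub hp).mul hB).const_mul v0)
  have e : ω0 + v0 / (vH + v0) * (1 * (ω0 + 1 - ω0)) + v0 * ((1 - 1) * 0) = ω0 + v0 / (vH + v0) := by
    ring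
  rw [e] at key
  refine key.congr' ?_
  filter_upwards [eventually_gt_atTop 0] with vL hvL
  rw [aux_form _ _ _ _ _ _ hA (by linarith)]

lemma aux_lim2 (ω0 v0 vH h : ℝ) (hv0 : 0 < v0) (hvH : 0 < vH)
    (hh0 : 0 < h) (hh1 : h < 1) :
    Tendsto (fun vL => aUncens ω0 v0 vH vL h (ω0 + Real.sqrt (vL + v0))) atTop (nhds ω0) := by
  have hA : 0 < vH + v0 := by linarith
  have h3 : 0 < 1 - h := by linarith
  have hBt : Tendsto (fun vL : ℝ => vL + v0) atTop atTop := tendsto_atTop_add_const_right _ _ tendsto_id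
  set K : ℝ := h / (1 - h) * (Real.sqrt (2 * Real.pi * (vH + v0)))⁻¹ * Real.exp (1 / 2) *
    Real.sqrt (2 * Real.pi) with hK
  have hE : Tendsto (fun vL : ℝ => K * ((vL + v0) * Real.exp (-(1 / (2 * (vH + v0))) * (vL + v0))))
      atTop (nhds 0) := by
    have := ((tendsto_rpow_mul_exp_neg_mul_atTop_nhds_zero 1 (1 / (2 * (vH + v0)))
      (by positivity)).comp hBt).const_mul K
    simpa using this
  have hp : Tendsto (fun vL => pHigh ω0 v0 vH vL h (ω0 + Real.sqrt (vL + v0)) *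
      (ω0 + Real.sqrt (vL + v0) - ω0)) atTop (nhds 0) := by
    refine tendsto_of_tendsto_of_tendsto_of_le_of_le' tendsto_const_nhds hE ?_ ?_
    · filter_upwards [eventually_gt_atTop 0] with vL hvL
      have := (aux_p01 ω0 v0 vH vL h (ω0 + Real.sqrt (vL + v0)) hA (by linarith) hh0 hh1).1
      have h2 := Real.sqrt_nonneg (vL + v0)
      rw [add_sub_cancel_left]
      positivity
    · filter_upwards [eventually_gt_atTop 0] with vL hvL
      have hB : 0 < vL + v0 := by linarith
      have := (aux_p01 ω0 v0 vH vL h (ω0 + Real.sqrt (vL + v0)) hA hB hh0 hh1).2.2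
      rw [add_sub_cancel_left]
      refine (mul_le_mul_of_nonneg_right this (Real.sqrt_nonneg _)).trans (le_of_eq ?_)
      unfold gauss
      rw [add_sub_cancel_left, Real.sq_sqrt hB.le, hK]
      have e1 : -(vL + v0) / (2 * (vL + v0)) = -(1 / 2) := by field_simp
      have e2 : -(vL + v0) / (2 * (vH + v0)) = -(1 / (2 * (vH + v0))) * (vL + v0) := by field_simp
      rw [e1, e2, Real.exp_neg (1 / 2), Real.sqrt_mul (by positivity) (vL + v0)]
      have hs := Real.sqrt_pos.2 hB
      have hs2 := Real.sqrt_pos.2 (show 0 < 2 * Real.pi by positivity)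
      have hs3 := Real.sqrt_pos.2 (show 0 < 2 * Real.pi * (vH + v0) by positivity)
      have hq := Real.sq_sqrt hB.le
      have he := Real.exp_pos (1 / 2)
      generalize Real.exp (-(1 / (2 * (vH + v0))) * (vL + v0)) = E
      generalize Real.exp (1 / 2) = F at *
      generalize Real.sqrt (2 * Real.pi * (vH + v0)) = G at *
      generalize Real.sqrt (2 * Real.pi) = P at *
      generalize Real.sqrt (vL + v0) = S at *
      rw [← hq]
      field_simp
  have hq : Tendsto (fun vL => (1 - pHigh ω0 v0 vH vL h (ω0 + Real.sqrt (vL + v0))) *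
      ((ω0 + Real.sqrt (vL + v0) - ω0) / (vL + v0))) atTop (nhds 0) := by
    have e1 : Tendsto (fun vL => (Real.sqrt (vL + v0))⁻¹) atTop (nhds 0) :=
      tendsto_inv_atTop_zero.comp (Real.tendsto_sqrt_atTop.comp hBt)
    have hs : ∀ vL : ℝ, (ω0 + Real.sqrt (vL + v0) - ω0) / (vL + v0) = (Real.sqrt (vL + v0))⁻¹ := by
      intro vL
      rw [add_sub_cancel_left, Real.sqrt_div_self]
    simp only [hs]
    refine tendsto_of_tendsto_of_tendsto_of_le_of_le' tendsto_const_nhds e1 ?_ ?_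
    · filter_upwards [eventually_gt_atTop 0] with vL hvL
      have := (aux_p01 ω0 v0 vH vL h (ω0 + Real.sqrt (vL + v0)) hA (by linarith) hh0 hh1).2.1
      exact mul_nonneg (by linarith) (by positivity)
    · filter_upwards [eventually_gt_atTop 0] with vL hvL
      have := (aux_p01 ω0 v0 vH vL h (ω0 + Real.sqrt (vL + v0)) hA (by linarith) hh0 hh1).1
      exact mul_le_of_le_one_left (by positivity) (by linarith)
  have key := ((hp.const_mul (v0 / (vH + v0))).const_add ω0).add (hq.const_mul v0)
  simp only [mul_zero, add_zero] at key
  refine key.congr' ?_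
  filter_upwards [eventually_gt_atTop 0] with vL hvL
  rw [aux_form _ _ _ _ _ _ hA (by linarith)]

/-- Proposition 4 (`prop:actionnonmon`): for large enough low-type variance, the uncensored
optimal action is not monotone in the signal; in particular there exist signals
`ω0 < s₁ < s₂` with `a*(s₁,∞) > a*(s₂,∞)`. -/
theorem stmt_5 (ω0 v0 vH h : ℝ) (hv0 : 0 < v0) (hvH : 0 < vH)
    (hh0 : 0 < h) (hh1 : h < 1) :
    ∃ ν : ℝ, ∀ vL : ℝ, ν < vL →
      ¬ Monotone (fun s => aUncens ω0 v0 vH vL h s) ∧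
      ∃ s₁ s₂ : ℝ, ω0 < s₁ ∧ s₁ < s₂ ∧
        aUncens ω0 v0 vH vL h s₂ < aUncens ω0 v0 vH vL h s₁ := by
  have hlt : ω0 < ω0 + v0 / (vH + v0) := by
    have : 0 < v0 / (vH + v0) := by positivity
    linarith
  have hev := ((aux_lim2 ω0 v0 vH h hv0 hvH hh0 hh1).eventually_lt
    (aux_lim1 ω0 v0 vH h hv0 hvH hh0 hh1) hlt).and (eventually_gt_atTop 1)
  obtain ⟨ν, hν⟩ := eventually_atTop.1 hev
  refine ⟨ν, fun vL hvL => ?_⟩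
  obtain ⟨ha, hb⟩ := hν vL hvL.le
  have hs : ω0 + 1 < ω0 + Real.sqrt (vL + v0) := by
    have : 1 < Real.sqrt (vL + v0) := by
      rw [Real.lt_sqrt (by norm_num)]; linarith
    linarith
  refine ⟨fun hm => ?_, ω0 + 1, _, by linarith, hs, ha⟩
  exact absurd (hm hs.le) (not_le.2 ha)
end

section
/- Fix ω0 ∈ ℝ, σ0² > 0, 0 < σH² < σL², and h ∈ (0,1). Define p(s) := h·φ(s; ω0, σH²+σ0²) / (h·φ(s; ω0, σH²+σ0²) + (1−h)·φ(s; ω0, σL²+σ0²)) and a_H*(s) := (σH²·ω0 + σ0²·s)/(σH² + σ0²). Then lim_{s → ∞} p(s)·a_H*(s) = 0. -/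
open MeasureTheory Real Filter

/-- Lemma A (`lem:normalpHtozero`): the contribution of high-type signals to the posterior
mean vanishes as the signal goes to infinity. -/
theorem stmt_10 (ω0 v0 vH vL h : ℝ) (hv0 : 0 < v0) (hvH : 0 < vH) (hHL : vH < vL)
    (hh0 : 0 < h) (hh1 : h < 1) :
    Tendsto
      (fun s : ℝ => pHigh ω0 v0 vH vL h s * ((vH * ω0 + v0 * s) / (vH + v0)))
      atTop (nhds 0) := by
  have hH : 0 < vH + v0 := by linarith
  have hL : 0 < vL + v0 := by linarith
  have h1h : 0 < 1 - h := by linarith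
  have hpi := Real.pi_pos
  have hA : 0 < (Real.sqrt (2 * Real.pi * (vH + v0)))⁻¹ := by positivity
  have hB : 0 < (Real.sqrt (2 * Real.pi * (vL + v0)))⁻¹ := by positivity
  obtain ⟨c, hc⟩ : ∃ c, c = 1 / (2 * (vH + v0)) - 1 / (2 * (vL + v0)) := ⟨_, rfl⟩
  have hc0 : 0 < c := by
    rw [hc, sub_pos]
    apply one_div_lt_one_div_of_lt <;> linarith
  obtain ⟨R, hR⟩ : ∃ R, R = h * (Real.sqrt (2 * Real.pi * (vH + v0)))⁻¹ /
      ((1 - h) * (Real.sqrt (2 * Real.pi * (vL + v0)))⁻¹) := ⟨_, rfl⟩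
  have hR0 : 0 < R := by rw [hR]; positivity
  obtain ⟨k, hk⟩ : ∃ k, k = v0 / (vH + v0) := ⟨_, rfl⟩
  have hk0 : 0 < k := by rw [hk]; positivity
  have hp0 : ∀ s, 0 ≤ pHigh ω0 v0 vH vL h s := by
    intro s
    unfold pHigh gauss
    positivity
  have hp1 : ∀ s, pHigh ω0 v0 vH vL h s ≤ R * Real.exp (-(c * (s - ω0) ^ 2)) := by
    intro s
    have hgH : 0 < gauss s ω0 (vH + v0) := by unfold gauss; positivity
    have hgL : 0 < gauss s ω0 (vL + v0) := by unfold gauss; positivity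
    have e : R * Real.exp (-(c * (s - ω0) ^ 2)) =
        h * gauss s ω0 (vH + v0) / ((1 - h) * gauss s ω0 (vL + v0)) := by
      have e1 : -(c * (s - ω0) ^ 2) =
          -(s - ω0) ^ 2 / (2 * (vH + v0)) - -(s - ω0) ^ 2 / (2 * (vL + v0)) := by
        rw [hc]; ring
      rw [e1, Real.exp_sub, hR]
      unfold gauss
      rw [div_mul_div_comm]
      congr 1 <;> ring
    rw [e]
    unfold pHigh
    apply div_le_div_of_nonneg_left
    · positivity
    · positivity
    · have : 0 < h * gauss s ω0 (vH + v0) := by positivity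
      linarith
  have hx : Tendsto (fun s : ℝ => (s - ω0)⁻¹) atTop (nhds 0) :=
    tendsto_inv_atTop_zero.comp (tendsto_atTop_add_const_right _ (-ω0) tendsto_id)
  have hlim : Tendsto (fun s : ℝ => R * c⁻¹ * (|ω0| * ((s - ω0)⁻¹) ^ 2 + k * (s - ω0)⁻¹))
      atTop (nhds 0) := by
    have := (((hx.pow 2).const_mul |ω0|).add (hx.const_mul k)).const_mul (R * c⁻¹)
    simpa using this
  refine squeeze_zero_norm' ?_ hlim
  filter_upwards [eventually_gt_atTop ω0] with s hs
  have hx0 : 0 < s - ω0 := by linarith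
  have ha : (vH * ω0 + v0 * s) / (vH + v0) = ω0 + k * (s - ω0) := by
    rw [hk]; field_simp; ring
  have hexp : Real.exp (-(c * (s - ω0) ^ 2)) ≤ c⁻¹ * ((s - ω0)⁻¹) ^ 2 := by
    rw [Real.exp_neg, inv_pow, ← mul_inv]
    apply inv_anti₀ (by positivity)
    have := Real.add_one_le_exp (c * (s - ω0) ^ 2)
    linarith
  rw [ha, norm_mul, Real.norm_eq_abs, Real.norm_eq_abs, abs_of_nonneg (hp0 s)]
  have h2 : |ω0 + k * (s - ω0)| ≤ |ω0| + k * (s - ω0) := by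
    refine (abs_add_le _ _).trans_eq ?_
    rw [abs_of_pos (mul_pos hk0 hx0)]
  calc _ ≤ (R * (c⁻¹ * ((s - ω0)⁻¹) ^ 2)) * (|ω0| + k * (s - ω0)) := by
        apply mul_le_mul _ h2 (abs_nonneg _) (by positivity)
        exact (hp1 s).trans (mul_le_mul_of_nonneg_left hexp hR0.le)
    _ = _ := by
        field_simp
end

section
/- Let ω0 ∈ ℝ, let the prior density have the form μ0(ω) = k(|ω − ω0|) for a nonincreasing function k : [0,∞) → [0,∞) such that μ0 is a probability density with ∫ |ω|·μ0(ω) dω < ∞, and let the signal density have the form f(s|ω) = j(|s − ω|) for a strictly decreasing function j : [0,∞) → (0,∞), with ∫ |ω|·j(|s − ω|)·μ0(ω) dω < ∞ for the fixed signal s under consideration. Then the posterior mean E(s) := (∫ ω·j(|s − ω|)·μ0(ω) dω) / (∫ j(|s − ω|)·μ0(ω) dω) satisfies: E(s) > ω0 if and only if s > ω0 (and E(s) = ω0 if s = ω0). That is, a Bayesian with a symmetric quasiconcave prior and a symmetric quasiconcave signal distribution updates in the direction of the signal. -/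
open MeasureTheory Real Filter

/-- Lemma 7 (`lem:UDS`, updating in the direction of the signal): with a prior symmetric and
quasiconcave about `ω0` and a signal density symmetric about the state and strictly
decreasing in the distance to it, the posterior mean exceeds `ω0` iff the signal does. -/
theorem stmt_16 (ω0 s : ℝ) (k j : ℝ → ℝ)
    (hk_nonneg : ∀ x : ℝ, 0 ≤ x → 0 ≤ k x)
    (hk_anti : AntitoneOn k (Set.Ici (0 : ℝ)))
    (hk_meas : Measurable k)
    (hμ_int : Integrable fun ω : ℝ => k |ω - ω0|)
    (hμ_prob : ∫ ω : ℝ, k |ω - ω0| = 1)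
    (hμ_mean : Integrable fun ω : ℝ => |ω| * k |ω - ω0|)
    (hj_pos : ∀ x : ℝ, 0 ≤ x → 0 < j x)
    (hj_anti : StrictAntiOn j (Set.Ici (0 : ℝ)))
    (hj_meas : Measurable j)
    (hpost_mean : Integrable fun ω : ℝ => |ω| * (j |s - ω| * k |ω - ω0|)) :
    ((∫ ω : ℝ, ω * (j |s - ω| * k |ω - ω0|)) /
        (∫ ω : ℝ, j |s - ω| * k |ω - ω0|) > ω0 ↔ s > ω0) ∧
    (s = ω0 →
      (∫ ω : ℝ, ω * (j |s - ω| * k |ω - ω0|)) /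
          (∫ ω : ℝ, j |s - ω| * k |ω - ω0|) = ω0) := by
  have hk0 : ∀ ω : ℝ, 0 ≤ k |ω - ω0| := fun ω => hk_nonneg _ (abs_nonneg _)
  have hj0 : ∀ ω : ℝ, 0 < j |s - ω| := fun ω => hj_pos _ (abs_nonneg _)
  have hjm : Measurable fun ω : ℝ => j |s - ω| := hj_meas.comp (by fun_prop)
  have hkm : Measurable fun ω : ℝ => k |ω - ω0| := hk_meas.comp (by fun_prop)
  have hD_int : Integrable fun ω : ℝ => j |s - ω| * k |ω - ω0| := by
    refine (hμ_int.const_mul (j 0)).mono' (hjm.mul hkm).aestronglyMeasurable ?_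
    refine Eventually.of_forall fun ω => ?_
    rw [Real.norm_eq_abs, abs_of_nonneg (mul_nonneg (hj0 ω).le (hk0 ω))]
    refine mul_le_mul_of_nonneg_right ?_ (hk0 ω)
    exact hj_anti.antitoneOn Set.self_mem_Ici (Set.mem_Ici.2 (abs_nonneg _)) (abs_nonneg _)
  have hM_int : Integrable fun ω : ℝ => ω * (j |s - ω| * k |ω - ω0|) := by
    refine hpost_mean.mono' (measurable_id.mul (hjm.mul hkm)).aestronglyMeasurable ?_
    refine Eventually.of_forall fun ω => ?_
    rw [Real.norm_eq_abs, abs_mul, abs_of_nonneg (mul_nonneg (hj0 ω).le (hk0 ω))]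
  have hsupp : 0 < volume (Function.support fun ω : ℝ => k |ω - ω0|) := by
    rw [← integral_pos_iff_support_of_nonneg hk0 hμ_int, hμ_prob]
    exact one_pos
  have hD_pos : 0 < ∫ ω : ℝ, j |s - ω| * k |ω - ω0| := by
    rw [integral_pos_iff_support_of_nonneg (fun ω => mul_nonneg (hj0 ω).le (hk0 ω)) hD_int]
    refine hsupp.trans_le (measure_mono fun ω hω => ?_)
    exact mul_ne_zero (hj0 ω).ne' hω
  set P : ℝ → ℝ := fun ω => (ω - ω0) * (j |s - ω| * k |ω - ω0|) with hP
  have hP_eq : P = fun ω => ω * (j |s - ω| * k |ω - ω0|) - ω0 * (j |s - ω| * k |ω - ω0|) := by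
    funext ω
    simp only [hP]
    ring
  have hP_int : Integrable P := by
    rw [hP_eq]
    exact hM_int.sub (hD_int.const_mul ω0)
  have hN : ∫ ω, P ω = (∫ ω : ℝ, ω * (j |s - ω| * k |ω - ω0|)) -
      ω0 * ∫ ω : ℝ, j |s - ω| * k |ω - ω0| := by
    rw [hP_eq, integral_sub hM_int (hD_int.const_mul ω0), integral_const_mul]
  have hQ_int : Integrable fun ω => P (2 * ω0 - ω) := hP_int.comp_sub_left (2 * ω0)
  have hQ : ∫ ω, P (2 * ω0 - ω) = ∫ ω, P ω := integral_sub_left_eq_self P volume (2 * ω0)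
  have hsum : ∀ ω, P ω + P (2 * ω0 - ω) =
      (ω - ω0) * (j |s - ω| - j |s - (2 * ω0 - ω)|) * k |ω - ω0| := by
    intro ω
    simp only [hP]
    rw [show 2 * ω0 - ω - ω0 = -(ω - ω0) by ring, abs_neg]
    ring
  have h2N : ∫ ω, (P ω + P (2 * ω0 - ω)) = 2 * ∫ ω, P ω := by
    rw [integral_add hP_int hQ_int, hQ]
    ring
  have hsgn : ∀ ω, s ≠ ω0 → ω ≠ ω0 →
      0 < (s - ω0) * ((ω - ω0) * (j |s - ω| - j |s - (2 * ω0 - ω)|)) := by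
    intro ω hs hω
    have hne : (s - ω0) * (ω - ω0) ≠ 0 := mul_ne_zero (sub_ne_zero.2 hs) (sub_ne_zero.2 hω)
    rw [← mul_assoc]
    rcases lt_or_gt_of_ne hne with h | h
    · refine mul_pos_of_neg_of_neg h (sub_neg.2 ?_)
      refine hj_anti (Set.mem_Ici.2 (abs_nonneg _)) (Set.mem_Ici.2 (abs_nonneg _)) ?_
      exact sq_lt_sq.1 (by nlinarith)
    · refine mul_pos h (sub_pos.2 ?_)
      refine hj_anti (Set.mem_Ici.2 (abs_nonneg _)) (Set.mem_Ici.2 (abs_nonneg _)) ?_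
      exact sq_lt_sq.1 (by nlinarith)
  have hkey : s ≠ ω0 → 0 < (s - ω0) * ∫ ω, P ω := by
    intro hs
    have hnn : ∀ ω, 0 ≤ (s - ω0) * (P ω + P (2 * ω0 - ω)) := by
      intro ω
      rw [hsum, ← mul_assoc]
      refine mul_nonneg ?_ (hk0 ω)
      by_cases hω : ω = ω0
      · simp [hω]
      · exact (hsgn ω hs hω).le
    have hpos : 0 < ∫ ω, (s - ω0) * (P ω + P (2 * ω0 - ω)) := by
      rw [integral_pos_iff_support_of_nonneg hnn ((hP_int.add hQ_int).const_mul _)]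
      have h1 : volume ((Function.support fun ω : ℝ => k |ω - ω0|) \ {ω0}) =
          volume (Function.support fun ω : ℝ => k |ω - ω0|) :=
        measure_diff_null (by simp)
      rw [← h1] at hsupp
      refine hsupp.trans_le (measure_mono fun ω hω => ?_)
      rw [Function.mem_support, hsum, ← mul_assoc]
      exact mul_ne_zero (hsgn ω hs hω.2).ne' hω.1
    rw [integral_const_mul, h2N] at hpos
    linarith
  have hzero : s = ω0 → ∫ ω, P ω = 0 := by
    intro hs
    have h0 : ∀ ω, P ω + P (2 * ω0 - ω) = 0 := by
      intro ω
      rw [hsum, hs, show ω0 - (2 * ω0 - ω) = -(ω0 - ω) by ring, abs_neg]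
      simp
    simp only [h0, integral_zero] at h2N
    linarith
  refine ⟨?_, fun hs => ?_⟩
  · rw [gt_iff_lt, lt_div_iff₀ hD_pos, ← sub_pos, ← hN, gt_iff_lt]
    constructor
    · intro h
      have hs : s ≠ ω0 := fun hs => h.ne' (hzero hs)
      exact sub_pos.1 ((pos_iff_pos_of_mul_pos (hkey hs)).2 h)
    · intro h
      exact (pos_iff_pos_of_mul_pos (hkey h.ne')).1 (sub_pos.2 h)
  · rw [div_eq_iff hD_pos.ne', ← sub_eq_zero, ← hN]
    exact hzero hs
end
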